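/- Let d ≥ 2 be an integer and let T = (V,E) be a critical d-dominating tournament. Then T*, the digraph obtained from T by adding a loop at every vertex, is not (d+1)-dominating. -/

import Mathlib

/-- `E` is a tournament on `V`: loopless, and for all distinct `x,y` exactly one of
`(x,y)`, `(y,x)` is an edge. -/
def IsTournament {V : Type*} (E : V → V → Prop) : Prop :=
  (∀ x : V, ¬ E x x) ∧ ∀ x y : V, x ≠ y → (E x y ↔ ¬ E y x)

/-- The restriction of the digraph `E` to `U` is `d`-dominating: every finite `S ⊆ U`
with `1 ≤ |S| ≤ d` has a common out-neighbor in `U`. -/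
def DomOn {V : Type*} (E : V → V → Prop) (d : ℕ) (U : Set V) : Prop :=
  ∀ S : Finset V, ↑S ⊆ U → S.Nonempty → S.card ≤ d → ∃ w ∈ U, ∀ s ∈ S, E s w

/-- `T*`: the digraph obtained from `E` by adding a loop at every vertex. -/
def WithLoops {V : Type*} (E : V → V → Prop) : V → V → Prop :=
  fun x y => E x y ∨ x = y

/-!
Delete a set `Z` of fewer than `d` vertices so that the rest is no longer `d`-dominating; this is
witnessed by a set `S` of at most `d` vertices all of whose common out-neighbors lie in `Z`. If
`T*` were `(d+1)`-dominating, then for each common out-neighbor `x` of `Z`, a common out-neighbor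
of `S ∪ {x}` in `T*` could not lie in `Z`, so it would be the sink of `S`; hence `x` would point to
that sink. But `Z` together with the sink has at most `d` vertices, so some common out-neighbor of
`Z` is itself an out-neighbor of the sink, contradicting asymmetry.
-/

section CommonOutNeighbors

variable {V : Type*} {E : V → V → Prop} {d : ℕ} {S Z : Finset V} {w w' x y : V}

/-- The common out-neighbors of a finite set `S` of vertices: the vertices witnessing domination
of `S`. -/
def commonOutNeighbors (E : V → V → Prop) (S : Finset V) : Set V :=
  {w | ∀ s ∈ S, E s w}

/-- `w` is the sink of the subdigraph induced on `S`: it lies in `S` and every other vertex of `S`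
points to it. The loops of `WithLoops E` account for `w` itself. -/
def IsSinkOf (E : V → V → Prop) (S : Finset V) (w : V) : Prop :=
  w ∈ S ∧ w ∈ commonOutNeighbors (WithLoops E) S

theorem IsTournament.asymm (hT : IsTournament E) : Std.Asymm E where
  asymm x y hxy := (hT.2 x y fun h => hT.1 y (h ▸ hxy)).1 hxy

theorem WithLoops.not_edge_swap [Std.Asymm E] (hxy : WithLoops E x y) : ¬ E y x := by
  rcases hxy with hxy | rfl
  · exact Std.Asymm.asymm _ _ hxy
  · exact Std.Irrefl.irrefl x

theorem WithLoops.antisymm [Std.Asymm E] (hxy : WithLoops E x y) (hyx : WithLoops E y x) :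
    x = y :=
  hyx.resolve_left hxy.not_edge_swap |>.symm

theorem IsSinkOf.unique [Std.Asymm E] (hw : IsSinkOf E S w) (hw' : IsSinkOf E S w') : w = w' :=
  (hw'.2 w hw.1).antisymm (hw.2 w' hw'.1)

theorem DomOn.commonOutNeighbors_nonempty (hdom : DomOn E d Set.univ) (hS : S.Nonempty)
    (hcard : S.card ≤ d) : (commonOutNeighbors E S).Nonempty :=
  let ⟨w, _, hw⟩ := hdom S (Set.subset_univ _) hS hcard
  ⟨w, hw⟩

theorem DomOn.nontrivial [Nonempty V] [Std.Irrefl E] (hd : 1 ≤ d) (hdom : DomOn E d Set.univ) :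
    Nontrivial V := by
  obtain ⟨v⟩ := ‹Nonempty V›
  obtain ⟨u, hu⟩ := hdom.commonOutNeighbors_nonempty (Finset.singleton_nonempty v) hd
  exact ⟨v, u, ne_of_irrefl (hu v (Finset.mem_singleton_self v))⟩

theorem exists_commonOutNeighbors_subset_of_not_domOn_compl (h : ¬ DomOn E d (↑Z : Set V)ᶜ) :
    ∃ S : Finset V, S.Nonempty ∧ S.card ≤ d ∧ commonOutNeighbors E S ⊆ Z := by
  unfold DomOn at h
  push Not at h
  obtain ⟨S, -, hS, hcard, hout⟩ := h
  refine ⟨S, hS, hcard, fun w hw => ?_⟩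
  by_contra hwZ
  obtain ⟨s, hs, hsw⟩ := hout w hwZ
  exact hsw (hw s hs)

theorem isSinkOf_of_notMem_commonOutNeighbors (hw : w ∈ commonOutNeighbors (WithLoops E) S)
    (hwE : w ∉ commonOutNeighbors E S) : IsSinkOf E S w := by
  obtain ⟨s, hs, hsw⟩ : ∃ s ∈ S, ¬ E s w := by simpa [commonOutNeighbors] using hwE
  obtain rfl := (hw s hs).resolve_left hsw
  exact ⟨hs, hw⟩

theorem DomOn.exists_isSinkOf_edge [Std.Asymm E]
    (hstar : DomOn (WithLoops E) (d + 1) Set.univ) (hcard : S.card ≤ d)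
    (hout : (commonOutNeighbors E S).Nonempty) (hsub : commonOutNeighbors E S ⊆ Z)
    (hx : x ∈ commonOutNeighbors E Z) : ∃ w, IsSinkOf E S w ∧ E x w := by
  classical
  obtain ⟨w, hw⟩ := hstar.commonOutNeighbors_nonempty (Finset.insert_nonempty x S)
    ((Finset.card_insert_le x S).trans (Nat.succ_le_succ hcard))
  have hxw : WithLoops E x w := hw x (Finset.mem_insert_self x S)
  have hsink : IsSinkOf E S w :=
    isSinkOf_of_notMem_commonOutNeighbors (fun s hs => hw s (Finset.mem_insert_of_mem hs))
      fun hwS => hxw.not_edge_swap (hx w (hsub hwS))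
  have hxS : x ∉ S := fun hxS =>
    let ⟨z, hz⟩ := hout
    Std.Asymm.asymm _ _ (hz x hxS) (hx z (hsub hz))
  exact ⟨w, hsink, hxw.resolve_right fun h => hxS (h ▸ hsink.1)⟩

end CommonOutNeighbors

theorem star_not_d_plus_one_dominating_general {V : Type*} {d : ℕ} {E : V → V → Prop}
    [Std.Asymm E] (hdom : DomOn E d Set.univ) {Z : Finset V} (hZ : Z.card < d)
    (hdel : ¬ DomOn E d (↑Z : Set V)ᶜ) : ¬ DomOn (WithLoops E) (d + 1) Set.univ := by
  classical
  intro hstar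
  obtain ⟨S, hS, hcard, hsub⟩ := exists_commonOutNeighbors_subset_of_not_domOn_compl hdel
  have hout := hdom.commonOutNeighbors_nonempty hS hcard
  have hZne : Z.Nonempty := hout.mono hsub
  obtain ⟨x, hx⟩ := hdom.commonOutNeighbors_nonempty hZne hZ.le
  obtain ⟨w, hw, -⟩ := hstar.exists_isSinkOf_edge hcard hout hsub hx
  obtain ⟨y, hy⟩ := hdom.commonOutNeighbors_nonempty (Finset.insert_nonempty w Z)
    ((Finset.card_insert_le w Z).trans hZ)
  have hwy : E w y := hy w (Finset.mem_insert_self w Z)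
  obtain ⟨w', hw', hyw'⟩ := hstar.exists_isSinkOf_edge hcard hout hsub
    fun z hz => hy z (Finset.mem_insert_of_mem hz)
  obtain rfl := hw.unique hw'
  exact Std.Asymm.asymm _ _ hwy hyw'

/-- Lemma: if `T` is a critical `d`-dominating tournament (it is `d`-dominating but no
proper subtournament is), then `T*` is not `(d+1)`-dominating. -/
theorem star_not_d_plus_one_dominating {V : Type*} [Nonempty V] (d : ℕ) (hd : 2 ≤ d)
    (E : V → V → Prop) (hT : IsTournament E)
    (hdom : DomOn E d (Set.univ : Set V))
    (hcrit : ∀ U : Set V, U.Nonempty → U ≠ Set.univ → ¬ DomOn E d U) :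
    ¬ DomOn (WithLoops E) (d + 1) (Set.univ : Set V) := by
  have := hT.asymm
  have := hdom.nontrivial (one_le_two.trans hd)
  obtain ⟨v⟩ := ‹Nonempty V›
  exact star_not_d_plus_one_dominating_general hdom (Z := {v}) (by rwa [Finset.card_singleton]) <|
    hcrit _ (by simp) (by simp)
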